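/- Assume the Euler-discretized MCARMA state space system (hypothesis (i) of the context). Then for every l ∈ {1,…,p−1}, every k ∈ {1,…,d} and every t ∈ ℝ, writing Q_1^{(l)} = (l−1)d + k, the approximated solution satisfies x_{Q_1^{(l)}+d}(t) = h^{−l} Σ_{n=0}^{l} (−1)^n C(l,n) x_k( t + (l−n)h ) − Σ_{w=0}^{l−1} h^{−(w+1)} Σ_{r=1}^{m} β_{(k−1)m+r}^{(p−l+w)} Σ_{v=0}^{w} (−1)^v C(w,v) ΔL_r( t + (w−v)h ), where C(·,·) denotes binomial coefficients. -/

import Mathlib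

def mcD (h : ℝ) (l : ℕ) (f : ℝ → ℝ) (t : ℝ) : ℝ :=
  ∑ n ∈ Finset.range (l + 1), (-1 : ℝ) ^ n * (l.choose n : ℝ) * f (t + ((l : ℝ) - n) * h)

lemma mcD_zero (h : ℝ) (f : ℝ → ℝ) (t : ℝ) : mcD h 0 f t = f t := by
  simp [mcD]

lemma mcD_succ (h : ℝ) (l : ℕ) (f : ℝ → ℝ) (t : ℝ) :
    mcD h (l + 1) f t = mcD h l f (t + h) - mcD h l f t := by
  have e : mcD h l f (t + h) = ∑ n ∈ Finset.range (l + 2),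
      (-1 : ℝ) ^ n * (l.choose n : ℝ) * f (t + h + ((l : ℝ) - n) * h) := by
    rw [Finset.sum_range_succ _ (l + 1)]
    simp [mcD]
  rw [e, Finset.sum_range_succ' _ (l + 1)]
  unfold mcD
  rw [Finset.sum_range_succ' _ (l + 1), add_sub_right_comm, ← Finset.sum_sub_distrib]
  congr 1
  · refine Finset.sum_congr rfl fun n _ => ?_
    have e1 : t + (((l + 1 : ℕ) : ℝ) - ((n + 1 : ℕ) : ℝ)) * h = t + ((l : ℝ) - n) * h := by
      push_cast; ring
    have e2 : t + h + ((l : ℝ) - ((n + 1 : ℕ) : ℝ)) * h = t + ((l : ℝ) - n) * h := by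
      push_cast; ring
    rw [e1, e2, Nat.choose_succ_succ']
    push_cast
    ring
  · have e1 : t + (((l + 1 : ℕ) : ℝ) - ((0 : ℕ) : ℝ)) * h = t + h + ((l : ℝ) - (0 : ℕ)) * h := by
      push_cast; ring
    rw [e1]; simp

/-- **Lemma 1 of the paper.**
Fix `p ≥ 2`, `d ≥ 1`, `m ≥ 1` and a step size `h ∈ (0,1]`.  Coefficients
`αc j ((k-1)d+s)` (the `(k,s)` entry of `A_j`) and `βc κ ((k-1)m+r)` (the `(k,r)` entry
of `β_{p−κ}`) are given, together with functions `x 1, …, x (pd) : ℝ → ℝ` and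
`ΔL 1, …, ΔL m : ℝ → ℝ` satisfying hypothesis (i) of the Euler-discretized MCARMA state
space system.  Then for every `l ∈ {1,…,p−1}`, `k ∈ {1,…,d}` and `t ∈ ℝ`, with
`Q_1^{(l)} = (l−1)d + k`:
`x (Q_1^{(l)} + d) t = h^{−l} ∑_{n=0}^{l} (−1)^n C(l,n) x k (t+(l−n)h)`
`− ∑_{w=0}^{l−1} h^{−(w+1)} ∑_{r=1}^{m} βc^{(p−l+w)}_{(k−1)m+r}`
`∑_{v=0}^{w} (−1)^v C(w,v) ΔL r (t+(w−v)h)`. -/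
theorem mcarma_euler_recursive_solution
    (p d m : ℕ) (hp : 2 ≤ p) (hd : 1 ≤ d) (hm : 1 ≤ m)
    (h : ℝ) (hh0 : 0 < h) (hh1 : h ≤ 1)
    (αc : ℕ → ℕ → ℝ) (βc : ℕ → ℕ → ℝ)
    (x : ℕ → ℝ → ℝ) (ΔL : ℕ → ℝ → ℝ)
    -- (i) Euler-discretized recursive equations (blocks 1,…,p−1)
    (hi : ∀ b k : ℕ, 1 ≤ b → b ≤ p - 1 → 1 ≤ k → k ≤ d → ∀ t : ℝ,
      x ((b - 1) * d + k + d) t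
        = (x ((b - 1) * d + k) (t + h) - x ((b - 1) * d + k) t
            - ∑ r ∈ Finset.Icc 1 m, βc (p - b) ((k - 1) * m + r) * ΔL r t) / h) :
    ∀ l k : ℕ, 1 ≤ l → l ≤ p - 1 → 1 ≤ k → k ≤ d → ∀ t : ℝ,
      x ((l - 1) * d + k + d) t
        = (h ^ l)⁻¹ * ∑ n ∈ Finset.range (l + 1),
            (-1 : ℝ) ^ n * (l.choose n : ℝ) * x k (t + ((l : ℝ) - n) * h)
          - ∑ w ∈ Finset.range l, (h ^ (w + 1))⁻¹ *
              ∑ r ∈ Finset.Icc 1 m, βc (p - l + w) ((k - 1) * m + r) *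
                ∑ v ∈ Finset.range (w + 1),
                  (-1 : ℝ) ^ v * (w.choose v : ℝ) * ΔL r (t + ((w : ℝ) - v) * h) := by
  have key : ∀ k : ℕ, 1 ≤ k → k ≤ d → ∀ l : ℕ, l ≤ p - 1 → ∀ t : ℝ,
      x (l * d + k) t = (h ^ l)⁻¹ * mcD h l (x k) t
        - ∑ w ∈ Finset.range l, (h ^ (w + 1))⁻¹ *
            ∑ r ∈ Finset.Icc 1 m, βc (p - l + w) ((k - 1) * m + r) * mcD h w (ΔL r) t := by
    intro k hk1 hkd l
    induction l with
    | zero => intro _ t; simp [mcD_zero]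
    | succ l ih =>
      intro hl t
      have ih' := ih (by omega)
      have e := hi (l + 1) k (by omega) hl hk1 hkd t
      have ei : (l + 1 - 1) * d + k + d = (l + 1) * d + k := by
        rw [Nat.add_sub_cancel]; ring
      rw [ei, Nat.add_sub_cancel, ih' (t + h), ih' t] at e
      rw [e, Finset.sum_range_succ', mcD_succ]
      have es : ∑ w ∈ Finset.range l, (h ^ (w + 1 + 1))⁻¹ *
            ∑ r ∈ Finset.Icc 1 m, βc (p - (l + 1) + (w + 1)) ((k - 1) * m + r)
              * mcD h (w + 1) (ΔL r) t
          = h⁻¹ * (∑ w ∈ Finset.range l, (h ^ (w + 1))⁻¹ *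
            ∑ r ∈ Finset.Icc 1 m, βc (p - l + w) ((k - 1) * m + r) * mcD h w (ΔL r) (t + h)
          - ∑ w ∈ Finset.range l, (h ^ (w + 1))⁻¹ *
            ∑ r ∈ Finset.Icc 1 m, βc (p - l + w) ((k - 1) * m + r) * mcD h w (ΔL r) t) := by
        rw [← Finset.sum_sub_distrib, Finset.mul_sum]
        refine Finset.sum_congr rfl fun w _ => ?_
        have ep : p - (l + 1) + (w + 1) = p - l + w := by omega
        rw [ep, ← mul_sub, ← Finset.sum_sub_distrib, pow_succ h (w + 1), mul_inv,
          mul_comm (h ^ (w + 1))⁻¹ h⁻¹, mul_assoc]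
        simp only [mcD_succ, mul_sub]
      rw [es]
      simp only [mcD_zero, add_zero, zero_add, pow_one]
      rw [pow_succ, mul_inv, div_eq_mul_inv]
      ring
  intro l k hl hlp hk hkd t
  have e := key k hk hkd l hlp t
  have ei : (l - 1) * d + k + d = l * d + k := by
    obtain ⟨j, rfl⟩ : ∃ j, l = j + 1 := ⟨l - 1, by omega⟩
    rw [Nat.add_sub_cancel]; ring
  rw [ei, e]
  rfl
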